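/- Let k and t be positive integers with k ≥ 4. There exists n₀ = n₀(k,t) such that for all integers n ≥ n₀: if F ⊆ binom([n],k) contains no copy of the k-uniform linear path P^{(k)}_{2t+1} and |F| = C(n−1,k−1) + C(n−2,k−1) + … + C(n−t,k−1), then there exists a set S ⊆ [n] with |S| = t such that F consists of exactly all k-subsets of [n] that intersect S. -/

import Mathlib

open Finset

/-- The family `F` of k-sets contains a k-uniform linear path of length ℓ. -/
def ContainsLinearPath (k ℓ : ℕ) {n : ℕ} (F : Finset (Finset (Fin n))) : Prop :=
  ∃ P : Fin ℓ → Finset (Fin n), Function.Injective P ∧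
    (∀ i, P i ∈ F) ∧ (∀ i, (P i).card = k) ∧
    (∀ i j : Fin ℓ, (i : ℕ) + 1 = (j : ℕ) → (P i ∩ P j).card = 1) ∧
    (∀ i j : Fin ℓ, (i : ℕ) + 1 < (j : ℕ) → P i ∩ P j = ∅)

/-!
Call a set `A` an `s`-kernel of `F` if `F` has an edge through `A` avoiding any `s` prescribed
points off `A`. For large `s`, a path in the graph `G` of two-element kernels expands greedily to a
linear path in `F`, so `G` has no path with `2 * t + 1` edges.

Füredi's intersection theorem reduces to homogeneous families, where the kernels inside an edge
depend only on their colour patterns and are closed under intersection. It follows that all but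
`O(n ^ (k - 2))` edges of `F` are spanned by stars of `G`, whence
`#F ≤ ∑ x, (deg x).choose (k - 1) + O(n ^ (k - 2))`. Since a graph without long paths has large
degrees summing to at most `t * n + O(1)`, convexity forces a set `S` of `t` vertices of nearly full
degree.

An edge missing `S` with a neighbour of `x ∈ S` would extend a zigzag between `S` and its common
neighbours to a forbidden path. Hence all edges missing `S` lie in the small set `Z` of
non-neighbours of `x`; they number `O(#Z ^ (k - 1))`, while the non-adjacencies exclude
`Ω(#Z * n ^ (k - 2))` of the `k`-sets meeting `S`. So `Z` is empty.
-/

section Kernel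

variable {α : Type*} {s k : ℕ} {F G : Finset (Finset α)} {A : Finset α}

/-- `A` is an `s`-kernel of `F`: some edge through `A` avoids any prescribed `s` points off `A`.
This is the consequence of being the centre of a large sunflower which the argument needs. -/
def IsKernel (s : ℕ) (F : Finset (Finset α)) (A : Finset α) : Prop :=
  ∀ W : Finset α, #W ≤ s → Disjoint W A → ∃ e ∈ F, A ⊆ e ∧ Disjoint e W

namespace IsKernel

lemma of_mem (hA : A ∈ F) : IsKernel s F A :=
  fun _ _ hW => ⟨A, hA, Subset.rfl, hW.symm⟩

lemma mono (hFG : F ⊆ G) (hA : IsKernel s F A) : IsKernel s G A := fun W hWs hWA =>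
  let ⟨e, he, hAe, heW⟩ := hA W hWs hWA
  ⟨e, hFG he, hAe, heW⟩

lemma card_le (hF : (F : Set (Finset α)).Sized k) (hA : IsKernel s F A) : #A ≤ k :=
  let ⟨_, he, hAe, _⟩ := hA ∅ (by simp) (disjoint_empty_left A)
  hF he ▸ card_le_card hAe

end IsKernel

variable [DecidableEq α]

lemma IsKernel.exists_inter_subset (hA : IsKernel s F A) {V : Finset α} (hV : #V ≤ s) :
    ∃ e ∈ F, A ⊆ e ∧ e ∩ V ⊆ A := by
  obtain ⟨e, heF, hAe, he⟩ := hA (V \ A) ((card_le_card sdiff_subset).trans hV) sdiff_disjoint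
  refine ⟨e, heF, hAe, fun x hx => ?_⟩
  by_contra hxA
  exact disjoint_left.1 he (mem_inter.1 hx).1 (mem_sdiff.2 ⟨(mem_inter.1 hx).2, hxA⟩)

variable {ι : Type*} [Fintype ι] {K : ι → Finset α}

lemma exists_partial_expansion (hF : (F : Set (Finset α)).Sized k)
    (hs : 2 * Fintype.card ι * k ≤ s) (hK : ∀ i, IsKernel s F (K i)) (I : Finset ι) :
    ∃ e : ι → Finset α, (∀ i ∈ I, e i ∈ F ∧ K i ⊆ e i ∧ ∀ j, e i ∩ K j ⊆ K i) ∧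
      ∀ i ∈ I, ∀ j ∈ I, i ≠ j → e i ∩ e j ⊆ K i ∩ K j := by
  classical
  induction I using Finset.induction_on with
  | empty => exact ⟨K, by simp, by simp⟩
  | insert r I hr ih =>
    obtain ⟨e, he, hinter⟩ := ih
    have hcard : #(I.biUnion e ∪ univ.biUnion K) ≤ s := calc
      _ ≤ #(I.biUnion e) + #(univ.biUnion K) := card_union_le _ _
      _ ≤ #I * k + Fintype.card ι * k :=
        add_le_add (card_biUnion_le_card_mul _ _ _ fun i hi => (hF (he i hi).1).le)
          (card_biUnion_le_card_mul _ _ _ fun i _ => (hK i).card_le hF)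
      _ ≤ s := by nlinarith [card_le_univ I]
    obtain ⟨f, hfF, hKf, hf⟩ := (hK r).exists_inter_subset hcard
    have hfK : ∀ j, f ∩ K j ⊆ K r := fun j =>
      (inter_subset_inter_left ((subset_biUnion_of_mem K (mem_univ j)).trans
        subset_union_right)).trans hf
    have hfe : ∀ i ∈ I, f ∩ e i ⊆ K r ∩ K i := fun i hi x hx => by
      have hxr : x ∈ K r := hf (inter_subset_inter_left ((subset_biUnion_of_mem e hi).trans
        subset_union_left) hx)
      exact mem_inter.2 ⟨hxr, (he i hi).2.2 r (mem_inter.2 ⟨(mem_inter.1 hx).2, hxr⟩)⟩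
    have hne : ∀ i ∈ I, i ≠ r := fun i hi hir => hr (hir ▸ hi)
    refine ⟨Function.update e r f, ?_, ?_⟩
    · simp only [forall_mem_insert, Function.update_self]
      refine ⟨⟨hfF, hKf, hfK⟩, fun i hi => ?_⟩
      rw [Function.update_of_ne (hne i hi)]
      exact he i hi
    · simp only [forall_mem_insert, Function.update_self, ne_eq, not_true_eq_false, false_imp_iff,
        true_and]
      refine ⟨fun i hi _ => ?_, fun i hi => ⟨fun _ => ?_, fun j hj hij => ?_⟩⟩
      · rw [Function.update_of_ne (hne i hi)]
        exact hfe i hi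
      · rw [Function.update_of_ne (hne i hi), inter_comm, inter_comm (K i)]
        exact hfe i hi
      · rw [Function.update_of_ne (hne i hi), Function.update_of_ne (hne j hj)]
        exact hinter i hi j hj hij

lemma exists_expansion (hF : (F : Set (Finset α)).Sized k)
    (hs : 2 * Fintype.card ι * k ≤ s) (hK : ∀ i, IsKernel s F (K i)) :
    ∃ e : ι → Finset α, (∀ i, e i ∈ F) ∧ Pairwise fun i j => e i ∩ e j = K i ∩ K j := by
  obtain ⟨e, he, hinter⟩ := exists_partial_expansion hF hs hK univ
  exact ⟨e, fun i => (he i (mem_univ i)).1, fun i j hij =>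
    (hinter i (mem_univ i) j (mem_univ j) hij).antisymm
      (inter_subset_inter (he i (mem_univ i)).2.1 (he j (mem_univ j)).2.1)⟩

end Kernel

section LinearPath

variable {n k s ℓ : ℕ} {F : Finset (Finset (Fin n))}

lemma containsLinearPath_of_isKernel (hk : 2 ≤ k) (hF : (F : Set (Finset (Fin n))).Sized k)
    (hs : 2 * ℓ * k ≤ s) {K : Fin ℓ → Finset (Fin n)} (hK : ∀ i, IsKernel s F (K i))
    (hnext : ∀ i j : Fin ℓ, (i : ℕ) + 1 = j → #(K i ∩ K j) = 1)
    (hfar : ∀ i j : Fin ℓ, (i : ℕ) + 1 < j → K i ∩ K j = ∅) :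
    ContainsLinearPath k ℓ F := by
  obtain ⟨e, heF, hinter⟩ := exists_expansion hF (by simpa using hs) hK
  have hne : ∀ i j, i < j → e i ≠ e j := by
    intro i j hij heq
    have hcard : #(K i ∩ K j) = k := by rw [← hinter hij.ne, ← heq, inter_self, hF (heF i)]
    rcases (Nat.succ_le_of_lt (Fin.lt_def.1 hij)).eq_or_lt with h | h
    · have := hnext i j h
      omega
    · rw [hfar i j h, card_empty] at hcard
      omega
  refine ⟨e, ?_, heF, fun i => hF (heF i), fun i j h => ?_, fun i j h => ?_⟩
  · intro i j heq
    by_contra hij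
    rcases lt_or_gt_of_ne hij with h | h
    exacts [hne i j h heq, hne j i h heq.symm]
  · rw [hinter (by omega), hnext i j h]
  · rw [hinter (by omega), hfar i j h]

end LinearPath

section KernelGraph

variable {α : Type*} [DecidableEq α] {s : ℕ} {F G : Finset (Finset α)}

/-- The graph whose edges are the two-element `s`-kernels of `F`. Its paths expand to linear paths
in `F`, which reduces the hypergraph problem to one about graphs. -/
def kernelGraph (s : ℕ) (F : Finset (Finset α)) : SimpleGraph α where
  Adj x y := x ≠ y ∧ IsKernel s F {x, y}
  symm := ⟨fun x y h => ⟨h.1.symm, pair_comm x y ▸ h.2⟩⟩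
  loopless := ⟨fun _ h => h.1 rfl⟩

noncomputable instance : DecidableRel (kernelGraph s F).Adj := Classical.decRel _

lemma kernelGraph_mono (hFG : F ⊆ G) : kernelGraph s F ≤ kernelGraph s G :=
  fun _ _ h => ⟨h.1, h.2.mono hFG⟩

end KernelGraph

section KernelGraphPath

open SimpleGraph

variable {n k s ℓ : ℕ} {F : Finset (Finset (Fin n))}

lemma containsLinearPath_of_isKernel_of_adj (hk : 2 ≤ k)
    (hF : (F : Set (Finset (Fin n))).Sized k) (hs : 2 * (ℓ + 1) * k ≤ s) {A : Finset (Fin n)}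
    (hA : IsKernel s F A) {v : Fin (ℓ + 1) → Fin n} (hv : Function.Injective v)
    (hadj : ∀ i : Fin ℓ, (kernelGraph s F).Adj (v i.castSucc) (v i.succ))
    (hvA : ∀ i, v i ∈ A ↔ i = 0) : ContainsLinearPath k (ℓ + 1) F := by
  have hvv : ∀ i j, v i = v j ↔ (i : ℕ) = j := fun i j => hv.eq_iff.trans Fin.ext_iff
  have hvA' : ∀ i, v i ∈ A ↔ (i : ℕ) = 0 := fun i => (hvA i).trans Fin.ext_iff
  let K : Fin (ℓ + 1) → Finset (Fin n) := Fin.cons A fun i => {v i.castSucc, v i.succ}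
  refine containsLinearPath_of_isKernel hk hF hs (K := K)
    (Fin.cases hA fun i => (hadj i).2) ?_ ?_
  · refine Fin.cases (Fin.cases (by simp) fun j hj => ?_)
      fun i => Fin.cases (by simp) fun j hij => ?_
    · have hinter : A ∩ {v j.castSucc, v j.succ} = {v 0} := by
        ext x
        simp only [mem_inter, mem_insert, mem_singleton]
        grind
      simp [K, hinter]
    · have hinter : ({v i.castSucc, v i.succ} ∩ {v j.castSucc, v j.succ} : Finset (Fin n)) =
          {v i.succ} := by
        ext x
        simp only [mem_inter, mem_insert, mem_singleton]
        grind
      simp [K, hinter]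
  · refine Fin.cases (Fin.cases (by simp) fun j hj => ?_)
      fun i => Fin.cases (by simp) fun j hij => ?_
    · simp only [K, Fin.cons_zero, Fin.cons_succ, eq_empty_iff_forall_notMem]
      grind
    · simp only [K, Fin.cons_succ, eq_empty_iff_forall_notMem]
      grind

lemma containsLinearPath_of_isKernel_of_walk (hk : 2 ≤ k)
    (hF : (F : Set (Finset (Fin n))).Sized k) {A : Finset (Fin n)} (hA : IsKernel s F A)
    {u v : Fin n} {p : (kernelGraph s F).Walk u v} (hp : p.IsPath)
    (hs : 2 * (p.length + 1) * k ≤ s) (hpA : ∀ x ∈ p.support, x ∈ A ↔ x = u) :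
    ContainsLinearPath k (p.length + 1) F := by
  refine containsLinearPath_of_isKernel_of_adj hk hF hs hA (v := fun i => p.getVert i)
    (fun i j hij => Fin.ext (hp.getVert_injOn (by grind) (by grind) hij))
    (fun i => p.adj_getVert_succ i.2) fun i => ?_
  rw [hpA _ (p.getVert_mem_support i), hp.getVert_eq_start_iff (by omega), Fin.ext_iff,
    Fin.val_zero]

lemma pathGraph_free_kernelGraph (hk : 2 ≤ k) (hF : (F : Set (Finset (Fin n))).Sized k)
    (hs : 2 * ℓ * k ≤ s) (hpath : ¬ ContainsLinearPath k ℓ F) :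
    (pathGraph (ℓ + 1)).Free (kernelGraph s F) := by
  rintro ⟨f⟩
  apply hpath
  cases ℓ with
  | zero => exact containsLinearPath_of_isKernel hk hF hs (K := fun _ => ∅) nofun nofun nofun
  | succ m =>
    have hadj : ∀ i : Fin (m + 1), (kernelGraph s F).Adj (f i.castSucc) (f i.succ) := fun i =>
      f.toHom.map_adj (pathGraph_adj.2 (by simp))
    refine containsLinearPath_of_isKernel_of_adj hk hF hs (hadj 0).2 (v := fun i => f i.succ)
      (f.injective.comp (Fin.succ_injective _)) (fun i => hadj i.succ) fun i => ?_
    have hf : ∀ a b, f a = f b ↔ (a : ℕ) = b := fun a b => f.injective.eq_iff.trans Fin.ext_iff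
    rw [mem_insert, mem_singleton, hf, hf, Fin.ext_iff]
    simp

end KernelGraphPath

section PathFree

open SimpleGraph

variable {V : Type*} {G : SimpleGraph V} {ℓ t : ℕ}

lemma pathGraph_isContained_of_forall_exists_adj {X : Finset V} (hX : X.Nonempty)
    (h : ∀ x ∈ X, ∀ W : Finset V, #W ≤ ℓ → ∃ y ∈ X, y ∉ W ∧ G.Adj x y) :
    pathGraph (ℓ + 1) ⊑ G := by
  classical
  have hpath : ∀ m ≤ ℓ, ∃ u ∈ X, ∃ v, ∃ p : G.Walk u v, p.IsPath ∧ p.length = m := by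
    intro m
    induction m with
    | zero =>
      obtain ⟨u, hu⟩ := hX
      exact fun _ => ⟨u, hu, u, .nil, .nil, rfl⟩
    | succ m ih =>
      intro hm
      obtain ⟨u, hu, v, p, hp, rfl⟩ := ih (by omega)
      obtain ⟨y, hy, hyp, huy⟩ := h u hu p.support.toFinset
        ((List.toFinset_card_le _).trans (by simpa using hm))
      exact ⟨y, hy, v, .cons huy.symm p, hp.cons (by simpa using hyp), rfl⟩
  obtain ⟨u, _, v, p, hp, rfl⟩ := hpath ℓ le_rfl
  exact hp.isContained_pathGraph

section Degeneracy

variable [DecidableRel G.Adj]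

lemma exists_card_adj_le_of_pathGraph_free (hG : (pathGraph (ℓ + 1)).Free G) {X : Finset V}
    (hX : X.Nonempty) : ∃ x ∈ X, #{y ∈ X | G.Adj x y} ≤ ℓ := by
  by_contra! h
  refine hG (pathGraph_isContained_of_forall_exists_adj hX fun x hx W hW => ?_)
  obtain ⟨y, hy, hyW⟩ := exists_mem_notMem_of_card_lt_card (hW.trans_lt (h x hx))
  exact ⟨y, (mem_filter.1 hy).1, hyW, (mem_filter.1 hy).2⟩

lemma sum_card_adj_le_of_pathGraph_free (hG : (pathGraph (ℓ + 1)).Free G) (X : Finset V) :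
    ∑ x ∈ X, #{y ∈ X | G.Adj x y} ≤ 2 * ℓ * #X := by
  classical
  induction X using Finset.strongInduction with
  | H X ih =>
    obtain rfl | hX := X.eq_empty_or_nonempty
    · simp
    obtain ⟨x, hx, hdeg⟩ := exists_card_adj_le_of_pathGraph_free hG hX
    have herase : ∀ y ∈ X.erase x,
        #{z ∈ X | G.Adj y z} = #{z ∈ X.erase x | G.Adj y z} + if G.Adj y x then 1 else 0 := by
      intro y _
      conv_lhs => rw [← insert_erase hx, filter_insert]
      split_ifs
      · rw [card_insert_of_notMem (by simp)]
      · rfl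
    have hback : ∑ y ∈ X.erase x, (if G.Adj y x then 1 else 0) ≤ ℓ := by
      rw [sum_boole, Nat.cast_id]
      refine (card_le_card fun y hy => ?_).trans hdeg
      grind [G.adj_comm]
    have hIH := ih (X.erase x) (erase_ssubset hx)
    rw [← add_sum_erase _ _ hx, sum_congr rfl herase, sum_add_distrib]
    have := card_erase_add_one hx
    nlinarith

end Degeneracy

lemma exists_isPath_of_complete {A B : Finset V} (hAB : ∀ a ∈ A, ∀ b ∈ B, G.Adj a b) {m : ℕ}
    (hA : m < #A) (hB : m < #B) {a : V} (ha : a ∈ A) :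
    ∃ b, ∃ p : G.Walk a b, p.IsPath ∧ p.length = 2 * m + 1 ∧ ∀ x ∈ p.support, x ∈ A ∨ x ∈ B := by
  classical
  have hAB' : Disjoint A B := Finset.disjoint_left.2 fun x hxA hxB => G.irrefl (hAB x hxA x hxB)
  obtain ⟨b, hb⟩ := card_pos.1 (Nat.zero_lt_of_lt hB)
  induction m generalizing A B a b with
  | zero =>
    have hab := hAB a ha b hb
    exact ⟨b, hab.toWalk, .of_adj hab, rfl, by simp +contextual [ha, hb]⟩
  | succ m ih =>
    have hA' : m < #(A.erase a) := by rw [card_erase_of_mem ha]; omega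
    have hB' : m < #(B.erase b) := by rw [card_erase_of_mem hb]; omega
    obtain ⟨a', ha'⟩ := card_pos.1 (Nat.zero_lt_of_lt hA')
    obtain ⟨b', hb'⟩ := card_pos.1 (Nat.zero_lt_of_lt hB')
    obtain ⟨c, p, hp, hlen, hsupp⟩ := ih (fun x hx y hy => hAB x (mem_of_mem_erase hx) y
      (mem_of_mem_erase hy)) hA' hB' ha' (hAB'.mono (erase_subset _ _) (erase_subset _ _)) b' hb'
    have hbp : b ∉ p.support := by grind [Finset.disjoint_left]
    have hap : a ∉ p.support := by grind [Finset.disjoint_left]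
    have hab := hAB a ha b hb
    refine ⟨c, .cons hab (.cons (hAB a' (mem_of_mem_erase ha') b hb).symm p),
      (hp.cons hbp).cons (by simp [hap, hab.ne]), by simp [hlen]; ring, ?_⟩
    simp only [Walk.support_cons, List.mem_cons]
    grind

lemma card_le_of_complete_of_pathGraph_free (hG : (pathGraph (2 * t + 2)).Free G)
    {A B : Finset V} (hA : t < #A) (hAB : ∀ a ∈ A, ∀ b ∈ B, G.Adj a b) : #B ≤ t := by
  by_contra! hB
  obtain ⟨a, ha⟩ := card_pos.1 (Nat.zero_lt_of_lt hA)
  obtain ⟨b, p, hp, hlen, -⟩ := exists_isPath_of_complete hAB hA hB ha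
  have hcopy := hp.isContained_pathGraph
  rw [hlen] at hcopy
  exact hG hcopy

variable [Fintype V] [DecidableRel G.Adj]

lemma card_filter_lt_card_adj_le (hG : (pathGraph (2 * t + 2)).Free G) (L : Finset V) :
    #{v | t < #{x ∈ L | G.Adj x v}} ≤ 2 ^ #L * t := by
  classical
  calc
    _ ≤ #((L.powerset.filter (t < #·)).biUnion fun T => {v | ∀ x ∈ T, G.Adj x v}) := by
      refine card_le_card fun v hv => ?_
      simp only [mem_biUnion, mem_filter, mem_powerset, mem_univ, true_and] at hv ⊢
      exact ⟨{x ∈ L | G.Adj x v}, ⟨filter_subset _ _, hv⟩, fun x hx => (mem_filter.1 hx).2⟩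
    _ ≤ #(L.powerset.filter (t < #·)) * t :=
      card_biUnion_le_card_mul _ _ _ fun T hT =>
        card_le_of_complete_of_pathGraph_free hG (mem_filter.1 hT).2
          fun x hx v hv => (mem_filter.1 hv).2 x hx
    _ ≤ 2 ^ #L * t := by
      gcongr
      exact (card_filter_le _ _).trans (card_powerset L).le

lemma sum_degree_le_of_pathGraph_free (hG : (pathGraph (2 * t + 2)).Free G) (L : Finset V) :
    ∑ x ∈ L, G.degree x ≤ t * Fintype.card V + 2 ^ #L * t * #L := by
  have hvertex : ∀ v, #{x ∈ L | G.Adj x v} ≤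
      t + if t < #{x ∈ L | G.Adj x v} then #L else 0 := by
    intro v
    split_ifs with h
    · exact (card_filter_le _ _).trans (Nat.le_add_left _ _)
    · exact not_lt.1 h
  calc
    ∑ x ∈ L, G.degree x = ∑ v, #{x ∈ L | G.Adj x v} := by
      simp_rw [← card_neighborFinset_eq_degree, neighborFinset_eq_filter]
      exact sum_card_bipartiteAbove_eq_sum_card_bipartiteBelow G.Adj
    _ ≤ ∑ v, (t + if t < #{x ∈ L | G.Adj x v} then #L else 0) := sum_le_sum fun v _ => hvertex v
    _ = t * Fintype.card V + #{v | t < #{x ∈ L | G.Adj x v}} * #L := by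
      rw [sum_add_distrib, ← sum_filter, sum_const, sum_const, smul_eq_mul, smul_eq_mul,
        card_univ, mul_comm t]
    _ ≤ t * Fintype.card V + 2 ^ #L * t * #L := by
      gcongr
      exact card_filter_lt_card_adj_le hG L

end PathFree

section Colouring

variable {α κ : Type*} {χ : α → κ}

/-- `e` is rainbow under the colouring `χ`: it has exactly one point of each colour, so subsets of
`e` correspond to sets of colours. -/
def IsRainbow (χ : α → κ) (e : Finset α) : Prop := Set.BijOn χ e Set.univ

lemma IsRainbow.card_eq [Fintype κ] {e : Finset α} (he : IsRainbow χ e) :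
    #e = Fintype.card κ := by
  rw [← card_univ]
  exact card_nbij χ (fun _ _ => mem_univ _) he.injOn (by simpa using he.surjOn)

variable [DecidableEq κ]

/-- The part of `e` with colour pattern `A`, used to compare subsets of different edges. -/
def colorPart (χ : α → κ) (e : Finset α) (A : Finset κ) : Finset α := {x ∈ e | χ x ∈ A}

lemma mem_colorPart {e : Finset α} {A : Finset κ} {x : α} :
    x ∈ colorPart χ e A ↔ x ∈ e ∧ χ x ∈ A := mem_filter

lemma colorPart_subset (e : Finset α) (A : Finset κ) : colorPart χ e A ⊆ e := filter_subset _ _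

lemma image_colorPart {e : Finset α} (he : IsRainbow χ e) (A : Finset κ) :
    (colorPart χ e A).image χ = A := by
  ext c
  simp only [mem_image, mem_colorPart]
  constructor
  · rintro ⟨x, ⟨-, hx⟩, rfl⟩
    exact hx
  · intro hc
    obtain ⟨x, hx, rfl⟩ := he.surjOn (Set.mem_univ c)
    exact ⟨x, ⟨hx, hc⟩, rfl⟩

lemma card_colorPart {e : Finset α} (he : IsRainbow χ e) (A : Finset κ) :
    #(colorPart χ e A) = #A := by
  rw [← card_image_of_injOn (he.injOn.mono (coe_subset.2 (colorPart_subset e A))),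
    image_colorPart he]

lemma colorPart_univ [Fintype κ] (e : Finset α) : colorPart χ e univ = e := by
  simp [colorPart]

lemma colorPart_image {e a : Finset α} (he : IsRainbow χ e) (ha : a ⊆ e) :
    colorPart χ e (a.image χ) = a := by
  ext x
  simp only [mem_colorPart, mem_image]
  refine ⟨fun ⟨hxe, y, hya, hyx⟩ => ?_, fun hx => ⟨ha hx, x, hx, rfl⟩⟩
  rwa [← he.injOn (ha hya) hxe hyx]

end Colouring

section Furedi

variable {α κ : Type*} [DecidableEq α] {s : ℕ}

lemma exists_card_le_mul_card_filter_mem {W : Finset α} (hW : #W ≤ s) {B : Finset (Finset α)}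
    (hB : B.Nonempty) (hBW : ∀ e ∈ B, ¬ Disjoint e W) :
    ∃ v ∈ W, #B ≤ s * #{e ∈ B | v ∈ e} := by
  have hcover : B ⊆ W.biUnion fun v => {e ∈ B | v ∈ e} := fun e he => by
    obtain ⟨v, hve, hvW⟩ := not_disjoint_iff.1 (hBW e he)
    exact mem_biUnion.2 ⟨v, hvW, mem_filter.2 ⟨he, hve⟩⟩
  have hWne : W.Nonempty := by
    obtain ⟨e, he⟩ := hB
    obtain ⟨v, -, hvW⟩ := not_disjoint_iff.1 (hBW e he)
    exact ⟨v, hvW⟩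
  refine exists_le_of_sum_le hWne ?_
  rw [sum_const, smul_eq_mul, ← mul_sum]
  exact Nat.mul_le_mul hW ((card_le_card hcover).trans card_biUnion_le)

variable [DecidableEq κ] {χ : α → κ} {F : Finset (Finset α)}

/-- `A` is not the colour pattern of an intersection of two distinct edges of `F`. -/
def AvoidsPattern (χ : α → κ) (F : Finset (Finset α)) (A : Finset κ) : Prop :=
  ∀ e ∈ F, ∀ f ∈ F, e ≠ f → (e ∩ f).image χ ≠ A

lemma AvoidsPattern.mono {G : Finset (Finset α)} {A : Finset κ} (hG : AvoidsPattern χ G A)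
    (hFG : F ⊆ G) : AvoidsPattern χ F A := fun e he f hf => hG e (hFG he) f (hFG hf)

lemma AvoidsPattern.union_filter_mem {D : Finset (Finset α)} {A : Finset κ} {a : Finset α} {v : α}
    (hF : ∀ e ∈ F, IsRainbow χ e) (hDF : D ⊆ F) (hD : AvoidsPattern χ D A)
    (hDa : ∀ e ∈ D, colorPart χ e A ≠ a) (hva : v ∉ a) :
    AvoidsPattern χ (D ∪ {e ∈ F | colorPart χ e A = a ∧ v ∈ e}) A := by
  have hpart : ∀ e ∈ F, ∀ f ∈ F, (e ∩ f).image χ = A →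
      colorPart χ e A = e ∩ f ∧ colorPart χ f A = e ∩ f := by
    rintro e he f hf rfl
    exact ⟨colorPart_image (hF e he) inter_subset_left,
      colorPart_image (hF f hf) inter_subset_right⟩
  intro e he f hf hef himage
  simp only [mem_union, mem_filter] at he hf
  obtain ⟨hparte, hpartf⟩ := hpart e (he.elim (hDF ·) (·.1)) f (hf.elim (hDF ·) (·.1)) himage
  rcases he with he | ⟨-, hea, hve⟩ <;> rcases hf with hf | ⟨-, hfa, hvf⟩
  · exact hD e he f hf hef himage
  · exact hDa e he (hparte.trans (hpartf.symm.trans hfa))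
  · exact hDa f hf (hpartf.trans (hparte.symm.trans hea))
  · exact hva (hea ▸ hparte ▸ mem_inter.2 ⟨hve, hvf⟩)

/-- Repeatedly delete all edges through a part that is not a kernel; a popular point of the
blocking set marks a proportion of them which avoids the pattern of that part. -/
lemma exists_kernel_subfamily (s : ℕ) (𝒜 : Finset (Finset κ)) (hF : ∀ e ∈ F, IsRainbow χ e) :
    ∃ R ⊆ F, ∃ D : Finset κ → Finset (Finset α),
      (∀ A ∈ 𝒜, ∀ e ∈ R, IsKernel s R (colorPart χ e A)) ∧
      (∀ A, D A ⊆ F ∧ AvoidsPattern χ (D A) A) ∧ #F ≤ #R + s * ∑ A ∈ 𝒜, #(D A) := by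
  induction F using Finset.strongInduction with
  | H F ih =>
    by_cases hall : ∀ A ∈ 𝒜, ∀ e ∈ F, IsKernel s F (colorPart χ e A)
    · exact ⟨F, Subset.rfl, fun _ => ∅, hall, by simp [AvoidsPattern], by simp⟩
    simp only [IsKernel] at hall
    push Not at hall
    obtain ⟨A₀, hA₀, e₀, he₀, W, hWs, hWe₀, hW⟩ := hall
    set a := colorPart χ e₀ A₀ with ha
    set B := {e ∈ F | colorPart χ e A₀ = a}
    have hBF : B ⊆ F := filter_subset _ _
    have hBne : B.Nonempty := ⟨e₀, mem_filter.2 ⟨he₀, rfl⟩⟩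
    obtain ⟨v, hvW, hv⟩ := exists_card_le_mul_card_filter_mem hWs hBne fun e he =>
      hW e (hBF he) ((mem_filter.1 he).2 ▸ colorPart_subset e A₀)
    obtain ⟨R, hR, D, hker, hD, hcard⟩ := ih (F \ B) (sdiff_ssubset hBF hBne)
      fun e he => hF e (sdiff_subset he)
    have hDF : ∀ A, D A ⊆ F := fun A => (hD A).1.trans sdiff_subset
    refine ⟨R, hR.trans sdiff_subset, fun A => D A ∪ if A = A₀ then {e ∈ B | v ∈ e} else ∅, hker,
      fun A => ?_, ?_⟩
    · dsimp only
      split_ifs with hA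
      · subst hA
        refine ⟨union_subset (hDF A) ((filter_subset _ _).trans hBF), ?_⟩
        rw [filter_filter]
        exact (hD A).2.union_filter_mem hF (hDF A) (by grind) (disjoint_left.1 hWe₀ hvW)
      · exact (union_empty (D A)).symm ▸ ⟨hDF A, (hD A).2⟩
    · have hcard_union : ∀ A ∈ 𝒜, #(D A ∪ if A = A₀ then {e ∈ B | v ∈ e} else ∅) =
          #(D A) + if A = A₀ then #{e ∈ B | v ∈ e} else 0 := fun A _ => by
        rw [card_union_of_disjoint (disjoint_sdiff_self_left.mono (hD A).1 (by grind)),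
          apply_ite card, card_empty]
      rw [sum_congr rfl hcard_union, sum_add_distrib, sum_ite_eq' 𝒜 A₀, if_pos hA₀, mul_add]
      have := card_sdiff_add_card_eq_card hBF
      omega

end Furedi

section Homogeneous

variable {α κ : Type*} [DecidableEq α] [DecidableEq κ] {s : ℕ} {χ : α → κ}
  {F R : Finset (Finset α)} {J : Set (Finset κ)}

/-- The structure produced by Füredi's intersection theorem: every edge of `R` is rainbow, the
colour patterns of the pairwise intersections (with `e = f` allowed) lie in `J`, and conversely
each pattern in `J` cuts out a kernel in every edge. -/
structure IsHomogeneous (s : ℕ) (χ : α → κ) (R : Finset (Finset α)) (J : Set (Finset κ)) :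
    Prop where
  isRainbow : ∀ e ∈ R, IsRainbow χ e
  image_inter_mem : ∀ e ∈ R, ∀ f ∈ R, (e ∩ f).image χ ∈ J
  isKernel : ∀ A ∈ J, ∀ e ∈ R, IsKernel s R (colorPart χ e A)

lemma exists_maximal_avoided_patterns [Finite κ] (C : ℕ) (F : Finset (Finset α))
    (χ : α → κ) :
    ∃ N : Finset (Finset κ), ∃ R ⊆ F, (∀ A ∈ N, AvoidsPattern χ R A) ∧ #F ≤ C ^ #N * #R ∧
      ∀ A ∉ N, ∀ D ⊆ R, AvoidsPattern χ D A → C * #D ≤ #R := by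
  let P : Set (Finset (Finset κ)) :=
    {N | ∃ R ⊆ F, (∀ A ∈ N, AvoidsPattern χ R A) ∧ #F ≤ C ^ #N * #R}
  obtain ⟨N, ⟨R, hRF, hR, hcard⟩, hmax⟩ := P.toFinite.exists_maximal
    ⟨∅, F, Subset.rfl, by simp, by simp⟩
  refine ⟨N, R, hRF, hR, hcard, fun A hA D hDR hD => ?_⟩
  by_contra! hlt
  refine hA (hmax ⟨D, hDR.trans hRF, fun B hB => ?_, ?_⟩ (subset_insert A N)
    (mem_insert_self A N))
  · obtain rfl | hB := mem_insert.1 hB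
    exacts [hD, (hR B hB).mono hDR]
  · rw [card_insert_of_notMem hA, pow_succ, mul_assoc]
    exact hcard.trans (Nat.mul_le_mul_left _ hlt.le)

variable [Fintype κ]

lemma IsHomogeneous.inter_mem (hR : IsHomogeneous s χ R J) (hne : R.Nonempty)
    (hs : 2 * Fintype.card κ ≤ s) {A B : Finset κ} (hA : A ∈ J) (hB : B ∈ J) : A ∩ B ∈ J := by
  obtain ⟨e, he⟩ := hne
  have hcard : ∀ f ∈ R, #f = Fintype.card κ := fun f hf => (hR.isRainbow f hf).card_eq
  obtain ⟨f, hf, hAf, hfe⟩ := (hR.isKernel A hA e he).exists_inter_subset (V := e)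
    (by rw [hcard e he]; omega)
  obtain ⟨g, hg, hBg, hgef⟩ := (hR.isKernel B hB e he).exists_inter_subset (V := e ∪ f)
    ((card_union_le e f).trans (by rw [hcard e he, hcard f hf]; omega))
  have hfg : f ∩ g = colorPart χ e (A ∩ B) := by
    ext x
    have hxe : x ∈ f ∩ g → x ∈ e := fun hx => colorPart_subset e B
      (hgef (mem_inter.2 ⟨(mem_inter.1 hx).2, mem_union_right e (mem_inter.1 hx).1⟩))
    have := @hAf x
    have := @hBg x
    have := @hfe x
    have := @hgef x
    grind [mem_colorPart]
  rw [← image_colorPart (hR.isRainbow e he) (A ∩ B), ← hfg]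
  exact hR.image_inter_mem f hf g hg

lemma IsHomogeneous.card_le_choose (hR : IsHomogeneous s χ R J) {Z : Finset α}
    (hZ : ∀ e ∈ R, e ⊆ Z) {B : Finset κ} (hB : ∀ A ∈ J, B ⊆ A → A = univ) :
    #R ≤ (#Z).choose #B := by
  rw [← card_powersetCard]
  refine card_le_card_of_injOn (colorPart χ · B) (fun e he => mem_coe.2 (mem_powersetCard.2
    ⟨(colorPart_subset e B).trans (hZ e he), card_colorPart (hR.isRainbow e he) B⟩)) ?_
  intro e he f hf hef
  have hsub : colorPart χ e B ⊆ e ∩ f :=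
    subset_inter (colorPart_subset e B) (by simpa only [hef] using colorPart_subset f B)
  have huniv : (e ∩ f).image χ = univ := hB _ (hR.image_inter_mem e he f hf) <| by
    simpa only [image_colorPart (hR.isRainbow e he)] using image_subset_image (f := χ) hsub
  have he' := colorPart_image (hR.isRainbow e he) (inter_subset_left (s₂ := f))
  have hf' := colorPart_image (hR.isRainbow f hf) (inter_subset_right (s₁ := e))
  rw [huniv, colorPart_univ] at he' hf'
  exact he'.trans hf'.symm

/-- The density loss in passing from a rainbow family with `r` colours to a homogeneous one. -/
def homogeneousConst (r s : ℕ) : ℕ := 2 * (2 * 2 ^ r * (s + 1)) ^ 2 ^ r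

/-- Avoid patterns one by one as long as this keeps a proportion `1 / C` of the edges. Afterwards
each remaining pattern fails to be a kernel in few edges only, and these can be deleted. -/
theorem exists_isHomogeneous_subfamily (s : ℕ) (hF : ∀ e ∈ F, IsRainbow χ e) :
    ∃ R ⊆ F, ∃ J, IsHomogeneous s χ R J ∧ #F ≤ homogeneousConst (Fintype.card κ) s * #R := by
  set C := 2 * 2 ^ Fintype.card κ * (s + 1) with hC
  obtain ⟨N, G, hGF, hG, hFG, hmax⟩ := exists_maximal_avoided_patterns C F χ
  obtain ⟨R, hRG, D, hker, hD, hGR⟩ := exists_kernel_subfamily s Nᶜ fun e he => hF e (hGF he)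
  have hsum : C * ∑ A ∈ Nᶜ, #(D A) ≤ 2 ^ Fintype.card κ * #G := by
    rw [mul_sum, ← Fintype.card_finset]
    exact (sum_le_card_nsmul _ _ #G fun A hA => hmax A (mem_compl.1 hA) _ (hD A).1 (hD A).2).trans
      (Nat.mul_le_mul_right _ (card_le_univ _))
  have hhalf : 2 * (s * ∑ A ∈ Nᶜ, #(D A)) ≤ #G := by
    refine Nat.le_of_mul_le_mul_left (hsum.trans' ?_) (Nat.two_pow_pos (Fintype.card κ))
    rw [hC]
    nlinarith [Nat.zero_le (2 ^ Fintype.card κ * ∑ A ∈ Nᶜ, #(D A))]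
  refine ⟨R, hRG.trans hGF, {A | A ∉ N ∨ A = univ}, ⟨fun e he => hF e (hGF (hRG he)), ?_, ?_⟩, ?_⟩
  · intro e he f hf
    by_cases hef : e = f
    · subst hef
      right
      rw [inter_self, ← image_colorPart (hF e (hGF (hRG he))) univ, colorPart_univ]
    · exact Or.inl fun hN => hG _ hN e (hRG he) f (hRG hf) hef rfl
  · rintro A (hA | rfl) e he
    · exact hker A (mem_compl.2 hA) e he
    · simpa only [colorPart_univ] using IsKernel.of_mem he
  · have hN : C ^ #N ≤ C ^ 2 ^ Fintype.card κ :=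
      Nat.pow_le_pow_right (by positivity) (Fintype.card_finset (α := κ) ▸ card_le_univ N)
    calc #F ≤ C ^ #N * #G := hFG
      _ ≤ C ^ 2 ^ Fintype.card κ * (2 * #R) := Nat.mul_le_mul hN (by omega)
      _ = homogeneousConst (Fintype.card κ) s * #R := by rw [homogeneousConst]; ring

end Homogeneous

section Patterns

variable {κ : Type*} [DecidableEq κ] {J : Set (Finset κ)}

lemma mem_of_infClosed_of_separated (hJ : InfClosed J) {A X : Finset κ} (hA : A ∈ J)
    (hXA : X ⊆ A) (hsep : ∀ y ∈ A \ X, ∃ M ∈ J, X ⊆ M ∧ y ∉ M) : X ∈ J := by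
  induction A using Finset.strongInduction with
  | H A ih =>
    obtain rfl | hne := hXA.eq_or_ssubset
    · exact hA
    obtain ⟨y, hyA, hyX⟩ := exists_of_ssubset hne
    obtain ⟨M, hM, hXM, hyM⟩ := hsep y (mem_sdiff.2 ⟨hyA, hyX⟩)
    refine ih (A ∩ M) ⟨inter_subset_left, fun h => hyM (mem_inter.1 (h hyA)).2⟩ (hJ hA hM)
      (subset_inter hXA hXM) fun z hz => hsep z ?_
    exact sdiff_subset_sdiff inter_subset_left Subset.rfl hz

lemma exists_star_or_edge_of_infClosed [Fintype κ] (hκ : 4 ≤ Fintype.card κ) (hJ : InfClosed J)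
    (hcompl : ∀ i j, i ≠ j → {i}ᶜ ∈ J ∨ {j}ᶜ ∈ J ∨ ({i, j} : Finset κ)ᶜ ∈ J) :
    (∃ a, ∀ b ≠ a, {a, b} ∈ J) ∨ ∃ a b, a ≠ b ∧ {a} ∈ J ∧ {b} ∈ J ∧ {a, b} ∈ J := by
  by_cases h : ∃ i j : κ, i ≠ j ∧ {i}ᶜ ∉ J ∧ {j}ᶜ ∉ J
  · obtain ⟨i, j, hij, hi, hj⟩ := h
    have hbelow : ∀ X ⊆ ({i, j} : Finset κ)ᶜ, X ∈ J := fun X hX => by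
      refine mem_of_infClosed_of_separated hJ (by grind) hX fun y hy => ?_
      rcases hcompl i y (by grind [mem_compl]) with h | h | h
      · exact absurd h hi
      · exact ⟨_, h, by grind [mem_compl]⟩
      · exact ⟨_, h, by grind [mem_compl]⟩
    obtain ⟨a, ha, b, hb, hab⟩ : ∃ a ∈ ({i, j} : Finset κ)ᶜ, ∃ b ∈ ({i, j} : Finset κ)ᶜ, a ≠ b :=
      one_lt_card.1 (by rw [card_compl, card_pair hij]; omega)
    exact Or.inr ⟨a, b, hab, hbelow _ (by grind), hbelow _ (by grind), hbelow _ (by grind)⟩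
  · have : Nonempty κ := Fintype.card_pos_iff.1 (by omega)
    obtain ⟨a, ha⟩ : ∃ a : κ, ∀ i ≠ a, {i}ᶜ ∈ J := by
      by_contra! hcon
      obtain ⟨i, -, hi⟩ := hcon (Classical.arbitrary κ)
      obtain ⟨j, hji, hj⟩ := hcon i
      exact h ⟨i, j, hji.symm, hi, hj⟩
    refine Or.inl ⟨a, fun b hb => ?_⟩
    obtain ⟨m, hm⟩ : (({a, b} : Finset κ)ᶜ).Nonempty :=
      card_pos.1 (by rw [card_compl, card_pair hb.symm]; omega)
    exact mem_of_infClosed_of_separated hJ (ha m (by grind [mem_compl])) (by grind [mem_compl])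
      fun y hy => ⟨_, ha y (by grind [mem_compl]), by grind [mem_compl]⟩

end Patterns

section RandomColouring

variable {α κ : Type*} [Fintype κ]

open Classical in
lemma card_fun_le_mul_card_isRainbow [Fintype α] {e : Finset α} (he : #e = Fintype.card κ) :
    Fintype.card (α → κ) ≤
      Fintype.card κ ^ Fintype.card κ * #{χ : α → κ | IsRainbow χ e} := by
  obtain ⟨σ⟩ : Nonempty (e ≃ κ) := Fintype.card_eq.1 (by rw [Fintype.card_coe, he])
  let recolour (ψ : α → κ) (v : α) : κ := if h : v ∈ e then σ ⟨v, h⟩ else ψ v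
  have hrainbow : ∀ ψ, IsRainbow (recolour ψ) e := fun ψ => by
    refine ⟨fun _ _ => Set.mem_univ _, fun v hv w hw hvw => ?_, fun c _ => ?_⟩
    · simpa [recolour, mem_coe.1 hv, mem_coe.1 hw] using hvw
    · exact ⟨σ.symm c, (σ.symm c).2, by simp [recolour]⟩
  let code (ψ : α → κ) : (e → κ) × {χ : α → κ // IsRainbow χ e} :=
    (fun v => ψ v, ⟨recolour ψ, hrainbow ψ⟩)
  have hcode : Function.Injective code := fun ψ ψ' h => by
    simp only [code, Prod.mk.injEq, Subtype.mk.injEq] at h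
    funext v
    by_cases hv : v ∈ e
    · exact congrFun h.1 ⟨v, hv⟩
    · simpa [recolour, hv] using congrFun h.2 v
  simpa [Fintype.card_subtype, he] using Fintype.card_le_of_injective code hcode

lemma exists_isRainbow_subfamily [Finite α] [Nonempty κ] {F : Finset (Finset α)}
    (hF : (F : Set (Finset α)).Sized (Fintype.card κ)) :
    ∃ χ : α → κ, ∃ R ⊆ F, (∀ e ∈ R, IsRainbow χ e) ∧
      #F ≤ Fintype.card κ ^ Fintype.card κ * #R := by
  classical
  have := Fintype.ofFinite α
  have hcount : ∑ _χ : α → κ, #F ≤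
      ∑ χ : α → κ, Fintype.card κ ^ Fintype.card κ * #{e ∈ F | IsRainbow χ e} := by
    calc ∑ _χ : α → κ, #F = ∑ _e ∈ F, Fintype.card (α → κ) := by simp [mul_comm]
      _ ≤ ∑ e ∈ F, Fintype.card κ ^ Fintype.card κ * #{χ : α → κ | IsRainbow χ e} :=
        sum_le_sum fun e he => card_fun_le_mul_card_isRainbow (hF he)
      _ = _ := by
        rw [← mul_sum, ← mul_sum]
        exact congrArg _ (sum_card_bipartiteAbove_eq_sum_card_bipartiteBelow
          fun e (χ : α → κ) => IsRainbow χ e)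
  obtain ⟨χ, -, hχ⟩ := exists_le_of_sum_le univ_nonempty hcount
  exact ⟨χ, {e ∈ F | IsRainbow χ e}, filter_subset _ _, fun e he => (mem_filter.1 he).2, hχ⟩

end RandomColouring

section Starless

open SimpleGraph

/-- `G` has a star spanning `e`; the edges with this property are counted by the degrees of `G`. -/
def ContainsStar {α : Type*} (G : SimpleGraph α) (e : Finset α) : Prop :=
  ∃ x ∈ e, ∀ y ∈ e, y ≠ x → G.Adj x y

lemma ContainsStar.mono {α : Type*} {G H : SimpleGraph α} (hGH : G ≤ H) {e : Finset α}
    (he : ContainsStar G e) : ContainsStar H e :=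
  let ⟨x, hx, hxe⟩ := he
  ⟨x, hx, fun y hy hyx => hGH (hxe y hy hyx)⟩

variable {α κ : Type*} [DecidableEq α] [DecidableEq κ] {s ℓ k : ℕ} {χ : α → κ}
  {F R : Finset (Finset α)} {J : Set (Finset κ)}

namespace IsHomogeneous

lemma kernelGraph_adj (hR : IsHomogeneous s χ R J) {e : Finset α} (he : e ∈ R) {v w : α}
    (hv : v ∈ e) (hw : w ∈ e) (hvw : v ≠ w) (hJ : {χ v, χ w} ∈ J) : (kernelGraph s R).Adj v w := by
  refine ⟨hvw, ?_⟩
  have hpair : colorPart χ e {χ v, χ w} = {v, w} := by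
    simpa using colorPart_image (hR.isRainbow e he) (insert_subset hv (singleton_subset_iff.2 hw))
  exact hpair ▸ hR.isKernel _ hJ e he

lemma containsStar (hR : IsHomogeneous s χ R J) {a : κ} (ha : ∀ b ≠ a, {a, b} ∈ J) {e : Finset α}
    (he : e ∈ R) : ContainsStar (kernelGraph s R) e := by
  obtain ⟨x, hx, rfl⟩ := (hR.isRainbow e he).surjOn (Set.mem_univ a)
  exact ⟨x, hx, fun y hy hyx => hR.kernelGraph_adj he hx hy hyx.symm
    (ha _ fun h => hyx ((hR.isRainbow e he).injOn hy hx h))⟩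

lemma exists_adj_notMem (hR : IsHomogeneous s χ R J) {e : Finset α} (he : e ∈ R) {v : α}
    (hv : v ∈ e) {b : κ} (hvb : χ v ≠ b) (hvJ : {χ v} ∈ J) (hvbJ : {χ v, b} ∈ J) {W : Finset α}
    (hW : #W ≤ s) : ∃ f ∈ R, ∃ w ∈ f, χ w = b ∧ w ∉ W ∧ (kernelGraph s R).Adj v w := by
  have hpart : colorPart χ e {χ v} = {v} := by
    simpa using colorPart_image (hR.isRainbow e he) (singleton_subset_iff.2 hv)
  obtain ⟨f, hf, hvf, hfW⟩ := (hpart ▸ hR.isKernel _ hvJ e he).exists_inter_subset hW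
  obtain ⟨w, hw, rfl⟩ := (hR.isRainbow f hf).surjOn (Set.mem_univ b)
  have hwv : v ≠ w := ne_of_apply_ne χ hvb
  refine ⟨f, hf, w, hw, rfl, fun hwW => hwv ?_,
    hR.kernelGraph_adj hf (singleton_subset_iff.1 hvf) hw hwv hvbJ⟩
  exact (mem_singleton.1 (hfW (mem_inter.2 ⟨hw, hwW⟩))).symm

lemma pathGraph_isContained (hR : IsHomogeneous s χ R J) (hne : R.Nonempty) (hℓ : ℓ ≤ s) {a b : κ}
    (hab : a ≠ b) (ha : {a} ∈ J) (hb : {b} ∈ J) (habJ : {a, b} ∈ J) :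
    pathGraph (ℓ + 1) ⊑ kernelGraph s R := by
  refine pathGraph_isContained_of_forall_exists_adj
    (X := R.biUnion fun e => colorPart χ e {a, b}) ?_ fun v hv W hW => ?_
  · obtain ⟨e, he⟩ := hne
    obtain ⟨x, hx, rfl⟩ := (hR.isRainbow e he).surjOn (Set.mem_univ a)
    exact ⟨x, mem_biUnion.2 ⟨e, he, mem_colorPart.2 ⟨hx, by simp⟩⟩⟩
  · obtain ⟨e, he, hv⟩ := mem_biUnion.1 hv
    obtain ⟨hve, hcolour⟩ := mem_colorPart.1 hv
    obtain ⟨f, hf, w, hw, hwc, hwW, hadj⟩ : ∃ f ∈ R, ∃ w ∈ f, χ w ∈ ({a, b} : Finset κ) ∧ w ∉ W ∧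
        (kernelGraph s R).Adj v w := by
      rcases mem_insert.1 hcolour with rfl | hvb
      · obtain ⟨f, hf, w, hw, rfl, h⟩ := hR.exists_adj_notMem he hve hab ha habJ (hW.trans hℓ)
        exact ⟨f, hf, w, hw, by simp, h⟩
      · obtain rfl := mem_singleton.1 hvb
        obtain ⟨f, hf, w, hw, rfl, h⟩ := hR.exists_adj_notMem he hve hab.symm hb
          (pair_comm a _ ▸ habJ) (hW.trans hℓ)
        exact ⟨f, hf, w, hw, by simp, h⟩
    exact ⟨w, mem_biUnion.2 ⟨f, hf, mem_colorPart.2 ⟨hw, hwc⟩⟩, hwW, hadj⟩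

variable [Fintype κ]

lemma compl_mem_of_choose_lt (hR : IsHomogeneous s χ R J) {Z : Finset α} (hZ : ∀ e ∈ R, e ⊆ Z)
    (hcard : (#Z).choose (Fintype.card κ - 2) < #R) {i j : κ} (hij : i ≠ j) :
    {i}ᶜ ∈ J ∨ {j}ᶜ ∈ J ∨ ({i, j} : Finset κ)ᶜ ∈ J := by
  by_contra! hcon
  refine hcard.not_ge ((hR.card_le_choose hZ (B := {i, j}ᶜ) fun A hA hsub => ?_).trans_eq
    (by rw [card_compl, card_pair hij]))
  by_contra hA'
  have : A ≠ {i}ᶜ ∧ A ≠ {j}ᶜ ∧ A ≠ {i, j}ᶜ := by grind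
  have hmem : ∀ x, x ∈ A ∨ x = i ∨ x = j := fun x => by
    by_contra! hx
    exact hx.1 (hsub (by simp [hx]))
  simp only [ne_eq, Finset.ext_iff, mem_compl, mem_insert, mem_singleton, mem_univ] at this hA'
  grind

lemma card_le_pow (hR : IsHomogeneous s χ R J) (hκ : 4 ≤ Fintype.card κ)
    (hs : 2 * Fintype.card κ ≤ s) (hℓ : ℓ ≤ s) {Z : Finset α} (hZ : ∀ e ∈ R, e ⊆ Z)
    (hpath : (pathGraph (ℓ + 1)).Free (kernelGraph s R))
    (hstar : ∀ e ∈ R, ¬ ContainsStar (kernelGraph s R) e) :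
    #R ≤ #Z ^ (Fintype.card κ - 2) := by
  refine le_trans ?_ (Nat.choose_le_pow _ _)
  by_contra! hcard
  have hne : R.Nonempty := card_pos.1 (Nat.zero_lt_of_lt hcard)
  rcases exists_star_or_edge_of_infClosed hκ (fun A hA B hB => hR.inter_mem hne hs hA hB)
    (fun i j hij => hR.compl_mem_of_choose_lt hZ hcard hij) with ⟨a, ha⟩ | ⟨a, b, hab, ha, hb, habJ⟩
  · obtain ⟨e, he⟩ := hne
    exact hstar e he (hR.containsStar ha he)
  · exact hpath (hR.pathGraph_isContained hne hℓ hab ha hb habJ)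

end IsHomogeneous

/-- The constant in the `O(n ^ (k - 2))` bound on the number of edges without a star. -/
def starlessConst (k s : ℕ) : ℕ := k ^ k * homogeneousConst k s

theorem card_le_of_not_containsStar [Finite α] (hk : 4 ≤ k) (hs : 2 * k ≤ s) (hℓ : ℓ ≤ s)
    (hF : (F : Set (Finset α)).Sized k) {Z : Finset α} (hZ : ∀ e ∈ F, e ⊆ Z)
    (hpath : (pathGraph (ℓ + 1)).Free (kernelGraph s F))
    (hstar : ∀ e ∈ F, ¬ ContainsStar (kernelGraph s F) e) :
    #F ≤ starlessConst k s * #Z ^ (k - 2) := by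
  have : Nonempty (Fin k) := ⟨⟨0, by omega⟩⟩
  obtain ⟨χ, G, hGF, hG, hFG⟩ := exists_isRainbow_subfamily (κ := Fin k) (by simpa using hF)
  obtain ⟨R, hRG, J, hR, hGR⟩ := exists_isHomogeneous_subfamily s hG
  have hmono : kernelGraph s R ≤ kernelGraph s F := kernelGraph_mono (hRG.trans hGF)
  have hRZ := hR.card_le_pow (by simpa using hk) (by simpa using hs) hℓ
    (fun e he => hZ e (hGF (hRG he))) (fun h => hpath (h.mono_right hmono))
    fun e he h => hstar e (hGF (hRG he)) (h.mono hmono)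
  simp only [Fintype.card_fin] at hFG hGR hRZ
  calc #F ≤ k ^ k * (homogeneousConst k s * #Z ^ (k - 2)) :=
        hFG.trans (Nat.mul_le_mul_left _ (hGR.trans (Nat.mul_le_mul_left _ hRZ)))
    _ = starlessConst k s * #Z ^ (k - 2) := by rw [starlessConst, mul_assoc]

end Starless

section EdgeCount

open SimpleGraph

variable {α : Type*} {s ℓ k : ℕ} {F : Finset (Finset α)} {Z : Finset α}

lemma card_le_sum_choose_of_containsStar {G : SimpleGraph α} [DecidableRel G.Adj]
    (hF : (F : Set (Finset α)).Sized k) (hZ : ∀ e ∈ F, e ⊆ Z) (hG : ∀ e ∈ F, ContainsStar G e) :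
    #F ≤ ∑ x ∈ Z, (#{y ∈ Z | G.Adj x y}).choose (k - 1) := by
  classical
  have hcover : F ⊆ Z.biUnion fun x =>
      (powersetCard (k - 1) {y ∈ Z | G.Adj x y}).image (insert x) := fun e he => by
    obtain ⟨x, hx, hxe⟩ := hG e he
    refine mem_biUnion.2 ⟨x, hZ e he hx, mem_image.2 ⟨e.erase x, mem_powersetCard.2 ⟨?_, ?_⟩,
      insert_erase hx⟩⟩
    · exact fun y hy => mem_filter.2
        ⟨hZ e he (mem_of_mem_erase hy), hxe y (mem_of_mem_erase hy) (ne_of_mem_erase hy)⟩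
    · rw [card_erase_of_mem hx, hF he]
  refine (card_le_card hcover).trans (card_biUnion_le.trans (sum_le_sum fun x _ => ?_))
  exact card_image_le.trans_eq (card_powersetCard _ _)

variable [Finite α] [DecidableEq α]

lemma card_le_add_sum_choose_card_adj (hk : 4 ≤ k) (hs : 2 * k ≤ s) (hℓ : ℓ ≤ s)
    (hF : (F : Set (Finset α)).Sized k) (hZ : ∀ e ∈ F, e ⊆ Z)
    (hpath : (pathGraph (ℓ + 1)).Free (kernelGraph s F)) :
    #F ≤ starlessConst k s * #Z ^ (k - 2) +
      ∑ x ∈ Z, (#{y ∈ Z | (kernelGraph s F).Adj x y}).choose (k - 1) := by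
  classical
  rw [← card_filter_add_card_filter_not (s := F) (ContainsStar (kernelGraph s F)), add_comm]
  have hsub : ∀ p : Finset α → Prop, [DecidablePred p] → F.filter p ⊆ F :=
    fun p _ => filter_subset p F
  refine add_le_add ?_ (card_le_sum_choose_of_containsStar (hF.mono (coe_subset.2 (hsub _)))
    (fun e he => hZ e (hsub _ he)) fun e he => (mem_filter.1 he).2)
  have hmono := kernelGraph_mono (s := s) (hsub (¬ ContainsStar (kernelGraph s F) ·))
  exact card_le_of_not_containsStar hk hs hℓ (hF.mono (coe_subset.2 (hsub _)))
    (fun e he => hZ e (hsub _ he)) (fun h => hpath (h.mono_right hmono))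
    fun e he h => (mem_filter.1 he).2 (h.mono hmono)

lemma card_le_mul_pow_of_pathGraph_free (hk : 4 ≤ k) (hs : 2 * k ≤ s) (hℓ : ℓ ≤ s)
    (hF : (F : Set (Finset α)).Sized k) (hZ : ∀ e ∈ F, e ⊆ Z)
    (hpath : (pathGraph (ℓ + 1)).Free (kernelGraph s F)) :
    #F ≤ (starlessConst k s + 2 * ℓ) * #Z ^ (k - 1) := by
  obtain ⟨r, rfl⟩ : ∃ r, k = r + 2 := ⟨k - 2, by omega⟩
  obtain rfl | ⟨e, he⟩ := F.eq_empty_or_nonempty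
  · simp
  have hZpos : 0 < #Z := by
    have := card_le_card (hZ e he)
    have := hF he
    omega
  have hchoose : ∀ x ∈ Z, (#{y ∈ Z | (kernelGraph s F).Adj x y}).choose (r + 1) ≤
      #{y ∈ Z | (kernelGraph s F).Adj x y} * #Z ^ r := fun x _ =>
    (Nat.choose_le_pow _ _).trans (by
      rw [pow_succ']
      exact Nat.mul_le_mul_left _ (Nat.pow_le_pow_left (card_filter_le _ _) r))
  calc #F ≤ starlessConst (r + 2) s * #Z ^ r +
        ∑ x ∈ Z, #{y ∈ Z | (kernelGraph s F).Adj x y} * #Z ^ r :=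
        (card_le_add_sum_choose_card_adj hk hs hℓ hF hZ hpath).trans
          (Nat.add_le_add_left (sum_le_sum hchoose) _)
    _ ≤ starlessConst (r + 2) s * #Z ^ (r + 1) + 2 * ℓ * #Z * #Z ^ r := by
        rw [← sum_mul]
        exact add_le_add (Nat.mul_le_mul_left _ (Nat.pow_le_pow_right hZpos r.le_succ))
          (Nat.mul_le_mul_right _ (sum_card_adj_le_of_pathGraph_free hpath Z))
    _ = (starlessConst (r + 2) s + 2 * ℓ) * #Z ^ (r + 1) := by ring

end EdgeCount

section Concentration

variable {ι : Type*} [Fintype ι] {a : ι → ℝ} {c δ ε q : ℝ} {t : ℕ}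

lemma sum_pow_three_le_add_sum_filter (ha₀ : ∀ i, 0 ≤ a i) (hsum : ∑ i, a i ≤ c) :
    ∑ i, a i ^ 3 ≤ c * δ ^ 2 + ∑ i with δ ≤ a i, a i ^ 3 := by
  rw [← sum_filter_not_add_sum_filter univ (δ ≤ a ·)]
  gcongr
  calc ∑ i with ¬ δ ≤ a i, a i ^ 3 ≤ ∑ i with ¬ δ ≤ a i, a i * δ ^ 2 := by
        refine sum_le_sum fun i hi => ?_
        rw [pow_succ' (a i)]
        exact mul_le_mul_of_nonneg_left
          (pow_le_pow_left₀ (ha₀ i) (not_le.1 (mem_filter.1 hi).2).le 2) (ha₀ i)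
    _ ≤ ∑ i, a i * δ ^ 2 := sum_le_univ_sum_of_nonneg fun i => mul_nonneg (ha₀ i) (sq_nonneg δ)
    _ ≤ c * δ ^ 2 := by
        rw [← sum_mul]
        gcongr

/-- The terms `a i * (1 - a i)` over the large `a i` sum to at most `2 * ε + c * δ ^ 2`, hence
each large `a i` is close to `1`. -/
lemma mul_one_sub_le_one_of_sum_pow_three (ha₀ : ∀ i, 0 ≤ a i) (ha₁ : ∀ i, a i ≤ 1)
    (hsum : ∑ i, a i ≤ c) (hcube : t - ε ≤ ∑ i, a i ^ 3)
    (hlarge : ∑ i with δ ≤ a i, a i ≤ t + ε) (hq : 0 < q) (hδ : 0 < δ) (hcδ : 2 * c * q * δ = 1)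
    (hε : 4 * q * ε ≤ δ) {i : ι} (hi : δ ≤ a i) : q * (1 - a i) ≤ 1 := by
  have hnonneg : ∀ j, 0 ≤ a j * (1 - a j) := fun j => mul_nonneg (ha₀ j) (sub_nonneg.2 (ha₁ j))
  have hterm : a i * (1 - a i) ≤ 2 * ε + c * δ ^ 2 := calc
    a i * (1 - a i) ≤ ∑ j with δ ≤ a j, a j * (1 - a j) :=
      single_le_sum (f := fun j => a j * (1 - a j)) (fun j _ => hnonneg j)
        (mem_filter.2 ⟨mem_univ i, hi⟩)
    _ ≤ ∑ j with δ ≤ a j, (a j - a j ^ 3) :=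
      sum_le_sum fun j _ => by nlinarith [mul_nonneg (ha₀ j) (hnonneg j)]
    _ ≤ 2 * ε + c * δ ^ 2 := by
      rw [sum_sub_distrib]
      linarith [sum_pow_three_le_add_sum_filter (δ := δ) ha₀ hsum]
  have hδi : δ * (1 - a i) ≤ a i * (1 - a i) :=
    mul_le_mul_of_nonneg_right hi (sub_nonneg.2 (ha₁ i))
  refine le_of_mul_le_mul_left ?_ hδ
  calc δ * (q * (1 - a i)) = q * (δ * (1 - a i)) := by ring
    _ ≤ q * (2 * ε + c * δ ^ 2) := by gcongr; exact hδi.trans hterm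
    _ = (4 * q * ε + 2 * c * q * δ * δ) / 2 := by ring
    _ ≤ δ * 1 := by rw [hcδ]; linarith

lemma card_filter_le_eq_of_sum_pow_three (ha₀ : ∀ i, 0 ≤ a i) (ha₁ : ∀ i, a i ≤ 1) (hc : 1 ≤ c)
    (hsum : ∑ i, a i ≤ c) (hcube : t - ε ≤ ∑ i, a i ^ 3)
    (hlarge : ∑ i with δ ≤ a i, a i ≤ t + ε) (hq : 2 * (t + 1) ≤ q) (hδ : 0 < δ)
    (hcδ : 2 * c * q * δ = 1) (hε : 4 * q * ε ≤ δ) : #{i | δ ≤ a i} = t := by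
  have hq₂ : 2 ≤ q := by linarith [t.cast_nonneg (α := ℝ)]
  have hq₀ : 0 < q := by linarith
  have hcδ' : c * δ ≤ 1 / 4 := by nlinarith [hq₂, mul_pos (zero_lt_one.trans_le hc) hδ]
  have hδ' : δ ≤ 1 / 4 := by nlinarith
  have hε' : ε ≤ 1 / 4 := by nlinarith
  set L : Finset ι := {i | δ ≤ a i}
  have hlower : (t : ℝ) < #L + 1 := by
    have hcard : ∑ i ∈ L, a i ^ 3 ≤ #L := by
      simpa using sum_le_card_nsmul L (a · ^ 3) 1 fun i _ => pow_le_one₀ (ha₀ i) (ha₁ i)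
    nlinarith [sum_pow_three_le_add_sum_filter (δ := δ) ha₀ hsum]
  have hupper : (#L : ℝ) < t + 1 := by
    have hclose : #L * (1 - 1 / q) ≤ ∑ i ∈ L, a i := by
      rw [← nsmul_eq_mul]
      refine card_nsmul_le_sum L a _ fun i hi => ?_
      have := mul_one_sub_le_one_of_sum_pow_three ha₀ ha₁ hsum hcube hlarge hq₀ hδ hcδ hε
        (mem_filter.1 hi).2
      rw [sub_le_comm, le_div_iff₀' hq₀]
      exact this
    by_contra! hL
    have hq' : (t + 1) * (1 / q) ≤ 1 / 2 := by
      rw [mul_one_div, div_le_iff₀ hq₀]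
      linarith
    have hq1 : 0 ≤ 1 - 1 / q := by
      rw [sub_nonneg, div_le_one hq₀]
      linarith
    nlinarith [mul_le_mul_of_nonneg_right hL hq1]
  exact_mod_cast le_antisymm (Nat.lt_add_one_iff.1 (by exact_mod_cast hupper))
    (Nat.lt_add_one_iff.1 (by exact_mod_cast hlower))

end Concentration

section BinomialEstimates

lemma one_sub_div_le_factorial_mul_choose_div_pow {n r i : ℕ} (hn : i + r ≤ n) (hn₀ : 0 < n) :
    1 - r * (i + r) / (n : ℝ) ≤ r.factorial * (n - i).choose r / (n : ℝ) ^ r := by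
  have hn' : (0 : ℝ) < n := Nat.cast_pos.2 hn₀
  have hbernoulli : 1 + r * (-((i + r) / n : ℝ)) ≤ (1 + -((i + r) / n : ℝ)) ^ r := by
    refine one_add_mul_le_pow ?_ r
    have : ((i + r) / n : ℝ) ≤ 1 := (div_le_one hn').2 (by exact_mod_cast hn)
    linarith
  have hdesc : ((n : ℝ) - (i + r)) ^ r ≤ r.factorial * (n - i).choose r := by
    have h := (Nat.pow_le_pow_left
      (show n - (i + r) ≤ n - i + 1 - r by omega) r).trans (Nat.pow_sub_le_descFactorial (n - i) r)
    rw [Nat.descFactorial_eq_factorial_mul_choose] at h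
    have hcast : ((n - (i + r) : ℕ) : ℝ) = n - (i + r) := by rw [Nat.cast_sub hn]; push_cast; ring
    rw [← hcast]
    exact_mod_cast h
  calc 1 - r * (i + r) / (n : ℝ) = 1 + r * (-((i + r) / n : ℝ)) := by ring
    _ ≤ (1 + -((i + r) / n : ℝ)) ^ r := hbernoulli
    _ = ((n : ℝ) - (i + r)) ^ r / (n : ℝ) ^ r := by
      rw [← div_pow, sub_div, div_self hn'.ne', sub_eq_add_neg]
    _ ≤ r.factorial * (n - i).choose r / (n : ℝ) ^ r := by gcongr

lemma sub_div_le_factorial_mul_sum_choose_div_pow {n r t : ℕ} (hn : t + r ≤ n) (hn₀ : 0 < n) :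
    t - t * (r * (t + r)) / (n : ℝ) ≤
      r.factorial * (∑ i ∈ Icc 1 t, (n - i).choose r : ℕ) / (n : ℝ) ^ r := by
  have hterm : ∀ i ∈ Icc 1 t, 1 - r * (t + r) / (n : ℝ) ≤
      r.factorial * (n - i).choose r / (n : ℝ) ^ r := fun i hi => by
    have hit := (mem_Icc.1 hi).2
    refine le_trans ?_ (one_sub_div_le_factorial_mul_choose_div_pow (by omega) hn₀)
    gcongr
  calc t - t * (r * (t + r)) / (n : ℝ) = ∑ _i ∈ Icc 1 t, (1 - r * (t + r) / (n : ℝ)) := by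
        rw [sum_const, Nat.card_Icc, nsmul_eq_mul, Nat.add_sub_cancel]; ring
    _ ≤ ∑ i ∈ Icc 1 t, r.factorial * (n - i).choose r / (n : ℝ) ^ r := sum_le_sum hterm
    _ = _ := by rw [← sum_div, ← mul_sum]; push_cast; rfl

lemma factorial_mul_choose_div_pow_le {d n r : ℕ} :
    r.factorial * d.choose r / (n : ℝ) ^ r ≤ (d / n : ℝ) ^ r := by
  rw [div_pow]
  gcongr
  rw [← Nat.cast_mul, ← Nat.descFactorial_eq_factorial_mul_choose]
  exact_mod_cast Nat.descFactorial_le_pow d r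

end BinomialEstimates

section DegreeStability

open SimpleGraph

lemma sub_div_le_sum_div_pow_three {ι : Type*} [Fintype ι] {d : ι → ℕ} {n r t A : ℕ} (hr : 3 ≤ r)
    (hn : t + r ≤ n) (hd : ∀ i, d i ≤ n)
    (hsum : ∑ i ∈ Icc 1 t, (n - i).choose r ≤ A * n ^ (r - 1) + ∑ i, (d i).choose r) :
    t - (t * (r * (t + r)) + r.factorial * A : ℕ) / (n : ℝ) ≤ ∑ i, (d i / n : ℝ) ^ 3 := by
  have hn₀ : (0 : ℝ) < n := Nat.cast_pos.2 (by omega)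
  have hterm : ∀ i, r.factorial * (d i).choose r / (n : ℝ) ^ r ≤ (d i / n : ℝ) ^ 3 := fun i =>
    factorial_mul_choose_div_pow_le.trans <| pow_le_pow_of_le_one (by positivity)
      ((div_le_one hn₀).2 (by exact_mod_cast hd i)) hr
  have hcast : (∑ i ∈ Icc 1 t, (n - i).choose r : ℕ) ≤
      A * (n : ℝ) ^ (r - 1) + ∑ i, ((d i).choose r : ℝ) := by exact_mod_cast hsum
  have hupper : r.factorial * (∑ i ∈ Icc 1 t, (n - i).choose r : ℕ) / (n : ℝ) ^ r ≤
      r.factorial * A / n + ∑ i, (d i / n : ℝ) ^ 3 := calc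
    _ ≤ r.factorial * (A * (n : ℝ) ^ (r - 1) + ∑ i, ((d i).choose r : ℝ)) / (n : ℝ) ^ r := by
      gcongr
    _ = r.factorial * A / n + ∑ i, r.factorial * (d i).choose r / (n : ℝ) ^ r := by
      rw [mul_add, add_div, mul_sum, sum_div, ← mul_assoc,
        ← pow_sub_one_mul (show r ≠ 0 by omega) (n : ℝ), mul_comm _ ((n : ℝ) ^ (r - 1)),
        mul_div_mul_left _ _ (pow_pos hn₀ _).ne']
    _ ≤ _ := by gcongr; exact hterm _
  have hlower := sub_div_le_factorial_mul_sum_choose_div_pow hn (by omega)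
  push_cast
  rw [add_div]
  linarith

lemma card_filter_le_mul_of_sum_le {ι : Type*} [Fintype ι] {a : ι → ℝ} {c : ℝ} {p : ℕ}
    (hp : 0 < p) (ha₀ : ∀ i, 0 ≤ a i) (hsum : ∑ i, a i ≤ c) :
    (#{i | (p : ℝ)⁻¹ ≤ a i} : ℝ) ≤ p * c := by
  have hp' : (0 : ℝ) < p := Nat.cast_pos.2 hp
  rw [← inv_mul_le_iff₀ hp', mul_comm, ← nsmul_eq_mul]
  exact (card_nsmul_le_sum _ a _ fun i hi => (mem_filter.1 hi).2).trans
    ((sum_le_univ_sum_of_nonneg ha₀).trans hsum)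

lemma exists_card_eq_forall_mul_sub_le {ι : Type*} [Fintype ι] {d : ι → ℕ} {n c q t E : ℕ}
    (hn : 0 < n) (hd : ∀ i, d i ≤ n) (hc : 1 ≤ c) (hsum : ∑ i, (d i / n : ℝ) ≤ c)
    (hcube : t - E / n ≤ ∑ i, (d i / n : ℝ) ^ 3)
    (hlarge : ∑ i with ((2 * c * q : ℕ) : ℝ)⁻¹ ≤ d i / n, (d i / n : ℝ) ≤ t + E / n)
    (hq : 2 * (t + 1) ≤ q) (hE : 4 * q * (2 * c * q) * E ≤ n) :
    ∃ S : Finset ι, #S = t ∧ ∀ i ∈ S, q * (n - d i) ≤ n := by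
  have hn₀ : (0 : ℝ) < n := Nat.cast_pos.2 hn
  have hq₀ : 0 < q := by omega
  have hd₀ : ∀ i, (0 : ℝ) ≤ d i / n := fun i => by positivity
  have hd₁ : ∀ i, (d i / n : ℝ) ≤ 1 := fun i => (div_le_one hn₀).2 (by exact_mod_cast hd i)
  have hδ : (0 : ℝ) < ((2 * c * q : ℕ) : ℝ)⁻¹ := by positivity
  have hcδ : 2 * (c : ℝ) * q * ((2 * c * q : ℕ) : ℝ)⁻¹ = 1 := by
    push_cast
    exact mul_inv_cancel₀ (by positivity)
  have hε : 4 * (q : ℝ) * (E / n) ≤ ((2 * c * q : ℕ) : ℝ)⁻¹ := by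
    rw [mul_div_assoc', div_le_iff₀ hn₀, ← div_eq_inv_mul, le_div_iff₀ (by positivity)]
    exact_mod_cast (mul_right_comm _ _ _).trans_le hE
  refine ⟨({i | ((2 * c * q : ℕ) : ℝ)⁻¹ ≤ d i / n} : Finset ι),
    card_filter_le_eq_of_sum_pow_three hd₀ hd₁ (by exact_mod_cast hc) hsum hcube hlarge
      (by exact_mod_cast hq) hδ hcδ hε, fun i hi => ?_⟩
  have hi := mul_one_sub_le_one_of_sum_pow_three hd₀ hd₁ hsum hcube hlarge
    (by exact_mod_cast hq₀) hδ hcδ hε (mem_filter.1 hi).2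
  rw [one_sub_div hn₀.ne', mul_div_assoc', div_le_one hn₀, ← Nat.cast_sub (hd i)] at hi
  exact_mod_cast hi

variable {V : Type*} [Fintype V] {G : SimpleGraph V} [DecidableRel G.Adj] {t : ℕ}

lemma sum_degree_div_le_of_pathGraph_free [Nonempty V] (hG : (pathGraph (2 * t + 2)).Free G)
    {L : Finset V} {m : ℕ} (hL : #L ≤ m) :
    ∑ x ∈ L, (G.degree x / Fintype.card V : ℝ) ≤
      t + (2 ^ m * t * m : ℕ) / (Fintype.card V : ℝ) := by
  have hV : (0 : ℝ) < Fintype.card V := Nat.cast_pos.2 Fintype.card_pos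
  have hm : 2 ^ #L * t * #L ≤ 2 ^ m * t * m := by gcongr; norm_num
  rw [← sum_div, div_le_iff₀ hV, add_mul, div_mul_cancel₀ _ hV.ne']
  exact_mod_cast (sum_degree_le_of_pathGraph_free hG L).trans (Nat.add_le_add_left hm _)

lemma sum_degree_div_le [Nonempty V] {ℓ : ℕ} (hG : (pathGraph (ℓ + 1)).Free G) :
    ∑ x, (G.degree x / Fintype.card V : ℝ) ≤ (2 * ℓ : ℕ) := by
  rw [← sum_div, div_le_iff₀ (Nat.cast_pos.2 Fintype.card_pos)]
  have := sum_card_adj_le_of_pathGraph_free hG univ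
  simp only [← neighborFinset_eq_filter, card_neighborFinset_eq_degree, card_univ] at this
  exact_mod_cast this

theorem exists_forall_mul_sub_degree_le (t r A q : ℕ) (hr : 3 ≤ r) :
    ∃ n₀ : ℕ, ∀ n ≥ n₀, ∀ (G : SimpleGraph (Fin n)) [DecidableRel G.Adj],
      (pathGraph (2 * t + 2)).Free G →
      ∑ i ∈ Icc 1 t, (n - i).choose r ≤ A * n ^ (r - 1) + ∑ x, (G.degree x).choose r →
      ∃ S : Finset (Fin n), #S = t ∧ ∀ x ∈ S, q * (n - G.degree x) ≤ n := by
  let c := 2 * (2 * t + 1)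
  let q' := q + 2 * (t + 1)
  let m := 2 * c * q' * c
  let E := t * (r * (t + r)) + r.factorial * A + 2 ^ m * t * m
  refine ⟨4 * q' * (2 * c * q') * E + t + r, fun n hn G _ hG hsum => ?_⟩
  have : Nonempty (Fin n) := ⟨⟨0, by omega⟩⟩
  have hdeg : ∀ x, G.degree x ≤ n := fun x =>
    (G.degree_lt_card_verts x).le.trans_eq (Fintype.card_fin n)
  have hdegsum : ∑ x, (G.degree x / n : ℝ) ≤ c := by
    simpa only [Fintype.card_fin] using sum_degree_div_le (ℓ := 2 * t + 1) hG
  have hcube : t - E / n ≤ ∑ x, (G.degree x / n : ℝ) ^ 3 := by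
    refine le_trans ?_ (sub_div_le_sum_div_pow_three hr (by omega) hdeg hsum)
    gcongr
    omega
  have hlarge : ∑ x with ((2 * c * q' : ℕ) : ℝ)⁻¹ ≤ G.degree x / n, (G.degree x / n : ℝ) ≤
      t + E / n := by
    have hL := card_filter_le_mul_of_sum_le (p := 2 * c * q') (by positivity)
      (fun x => by positivity) hdegsum
    have hsumL := sum_degree_div_le_of_pathGraph_free hG (m := m) (by exact_mod_cast hL)
    rw [Fintype.card_fin] at hsumL
    refine hsumL.trans ?_
    gcongr
    omega
  obtain ⟨S, hS, hSdeg⟩ := exists_card_eq_forall_mul_sub_le (by omega) hdeg (by omega) hdegsum hcube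
    hlarge (by omega) (by omega)
  exact ⟨S, hS, fun x hx => (Nat.mul_le_mul_right _ (by omega)).trans (hSdeg x hx)⟩

theorem exists_forall_mul_sub_degree_kernelGraph_le {k s : ℕ} (t q : ℕ) (hk : 4 ≤ k)
    (hs : 2 * k ≤ s) (ht : 2 * t + 1 ≤ s) :
    ∃ n₀ : ℕ, ∀ n ≥ n₀, ∀ F : Finset (Finset (Fin n)), (F : Set (Finset (Fin n))).Sized k →
      (pathGraph (2 * t + 2)).Free (kernelGraph s F) →
      ∑ i ∈ Icc 1 t, (n - i).choose (k - 1) ≤ #F →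
      ∃ S : Finset (Fin n), #S = t ∧ ∀ x ∈ S, q * (n - (kernelGraph s F).degree x) ≤ n := by
  obtain ⟨n₀, hn₀⟩ := exists_forall_mul_sub_degree_le t (k - 1) (starlessConst k s) q (by omega)
  refine ⟨n₀, fun n hn F hF hpath hcard => hn₀ n hn _ hpath ?_⟩
  have hcount := card_le_add_sum_choose_card_adj hk hs ht hF (fun e _ => subset_univ e) hpath
  simp only [← neighborFinset_eq_filter, card_neighborFinset_eq_degree, card_univ,
    Fintype.card_fin] at hcount
  exact hcard.trans hcount

end DegreeStability

section MeetingFamily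

variable {α : Type*} [Fintype α] [DecidableEq α]

/-- The extremal family: all `k`-sets that meet `S`. -/
def meetingFamily (k : ℕ) (S : Finset α) : Finset (Finset α) :=
  {A ∈ powersetCard k univ | (A ∩ S).Nonempty}

lemma sum_Icc_choose_add_choose {n k t : ℕ} (hk : k ≠ 0) (ht : t ≤ n) :
    ∑ i ∈ Icc 1 t, (n - i).choose (k - 1) + (n - t).choose k = n.choose k := by
  induction t with
  | zero => simp
  | succ t ih =>
    have hpascal := Nat.choose_eq_choose_pred_add (n := n - t) (by omega) (Nat.pos_of_ne_zero hk)
    rw [sum_Icc_succ_top (by omega), ← ih (by omega), hpascal, Nat.sub_sub, add_assoc]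

lemma card_meetingFamily {k : ℕ} (hk : k ≠ 0) (S : Finset α) :
    #(meetingFamily k S) = ∑ i ∈ Icc 1 #S, (Fintype.card α - i).choose (k - 1) := by
  have hcompl : ({A ∈ powersetCard k univ | ¬ (A ∩ S).Nonempty} : Finset (Finset α)) =
      powersetCard k Sᶜ := by
    ext A
    simp [mem_powersetCard, not_nonempty_iff_eq_empty, ← disjoint_iff_inter_eq_empty,
      subset_compl_iff_disjoint_right, and_comm]
  have hsplit := card_filter_add_card_filter_not (s := powersetCard k (univ : Finset α))
    fun A => (A ∩ S).Nonempty
  rw [hcompl, card_powersetCard, card_powersetCard, card_compl, card_univ,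
    ← sum_Icc_choose_add_choose hk (card_le_univ S)] at hsplit
  exact Nat.add_right_cancel hsplit

lemma disjoint_of_mem_sdiff_meetingFamily {k : ℕ} {F : Finset (Finset α)} {S e : Finset α}
    (hF : (F : Set (Finset α)).Sized k) (he : e ∈ F \ meetingFamily k S) : Disjoint e S := by
  obtain ⟨heF, heM⟩ := mem_sdiff.1 he
  simpa [meetingFamily, hF heF, not_nonempty_iff_eq_empty, disjoint_iff_inter_eq_empty] using heM

end MeetingFamily

section MissingSets

variable {α : Type*} [Fintype α] [DecidableEq α] {s k : ℕ} {F : Finset (Finset α)}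

lemma choose_le_card_notMem_of_not_isKernel {A Z : Finset α} (hA : ¬ IsKernel s F A)
    (hAk : #A ≤ k) (hAZ : Disjoint A Z) :
    (Fintype.card α - #Z - #A - s).choose (k - #A) ≤
      #{B ∈ powersetCard k univ | A ⊆ B ∧ Disjoint B Z ∧ B ∉ F} := by
  simp only [IsKernel] at hA
  push Not at hA
  obtain ⟨W, hWs, hWA, hW⟩ := hA
  have hfree : Fintype.card α - #Z - #A - s ≤ #(Z ∪ A ∪ W)ᶜ := by
    have := card_union_le (Z ∪ A) W
    have := card_union_le Z A
    rw [card_compl]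
    omega
  have hdisj : ∀ B ∈ powersetCard (k - #A) (Z ∪ A ∪ W)ᶜ,
      Disjoint B Z ∧ Disjoint B A ∧ Disjoint B W := fun B hB => by
    simpa only [subset_compl_iff_disjoint_right, disjoint_union_right, and_assoc] using
      (mem_powersetCard.1 hB).1
  refine (Nat.choose_le_choose _ hfree).trans ?_
  rw [← card_powersetCard]
  refine card_le_card_of_injOn (A ∪ ·) (fun B hB => ?_) fun B hB C hC hBC => ?_
  · obtain ⟨hBZ, hBA, hBW⟩ := hdisj B hB
    have hcard := (mem_powersetCard.1 hB).2
    refine mem_filter.2 ⟨mem_powersetCard.2 ⟨subset_univ _, ?_⟩, subset_union_left,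
      disjoint_union_left.2 ⟨hAZ, hBZ⟩, fun hmem => hW _ hmem subset_union_left
        (disjoint_union_left.2 ⟨hWA.symm, hBW⟩)⟩
    rw [card_union_of_disjoint hBA.symm]
    omega
  · rw [← union_sdiff_cancel_left (hdisj B hB).2.1.symm, show A ∪ B = A ∪ C from hBC,
      union_sdiff_cancel_left (hdisj C hC).2.1.symm]

lemma card_mul_choose_le_card_notMem (hk : 2 ≤ k) {x : α} {Z : Finset α} (hxZ : x ∉ Z)
    (hadj : ∀ u ∈ Z, ¬ (kernelGraph s F).Adj x u) :
    #Z * (Fintype.card α - #Z - 1 - s).choose (k - 2) ≤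
      #{B ∈ powersetCard k univ | x ∈ B ∧ B ∉ F} := by
  let T (u : α) : Finset (Finset α) :=
    {B ∈ powersetCard k univ | {x, u} ⊆ B ∧ Disjoint B (Z.erase u) ∧ B ∉ F}
  have hdisj : (Z : Set α).PairwiseDisjoint T := fun u _ v hv huv => by
    refine disjoint_left.2 fun B hBu hBv => ?_
    have hv' : v ∈ B := (mem_filter.1 hBv).2.1 (by simp)
    exact disjoint_left.1 (mem_filter.1 hBu).2.2.1 hv' (mem_erase.2 ⟨huv.symm, hv⟩)
  have hT : ∀ u ∈ Z, (Fintype.card α - #Z - 1 - s).choose (k - 2) ≤ #(T u) := fun u hu => by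
    have hxu : x ≠ u := fun h => hxZ (h ▸ hu)
    have hcard := choose_le_card_notMem_of_not_isKernel (fun h => hadj u hu ⟨hxu, h⟩)
      (k := k) (Z := Z.erase u) (by rwa [card_pair hxu]) (by simp [hxZ])
    rw [card_pair hxu, card_erase_of_mem hu] at hcard
    refine (Nat.choose_le_choose _ ?_).trans hcard
    have := card_pos.2 ⟨u, hu⟩
    omega
  rw [← smul_eq_mul]
  refine (card_nsmul_le_sum Z _ _ hT).trans ?_
  rw [← card_biUnion hdisj]
  refine card_le_card (biUnion_subset.2 fun u _ B hB => ?_)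
  obtain ⟨hBk, hxuB, -, hBF⟩ := mem_filter.1 hB
  exact mem_filter.2 ⟨hBk, hxuB (mem_insert_self x _), hBF⟩

lemma card_mul_choose_le_card_meetingFamily_sdiff (hk : 2 ≤ k) {x : α} {S Z : Finset α}
    (hxS : x ∈ S) (hxZ : x ∉ Z) (hadj : ∀ u ∈ Z, ¬ (kernelGraph s F).Adj x u) :
    #Z * (Fintype.card α - #Z - 1 - s).choose (k - 2) ≤ #(meetingFamily k S \ F) := by
  refine (card_mul_choose_le_card_notMem hk hxZ hadj).trans (card_le_card fun B hB => ?_)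
  obtain ⟨hBk, hxB, hBF⟩ := mem_filter.1 hB
  exact mem_sdiff.2 ⟨mem_filter.2 ⟨hBk, x, mem_inter.2 ⟨hxB, hxS⟩⟩, hBF⟩

end MissingSets

section Exactness

open SimpleGraph

lemma exists_complete_card_le_add_sum {V : Type*} [Fintype V] (G : SimpleGraph V)
    [DecidableRel G.Adj] (S : Finset V) :
    ∃ N : Finset V, (∀ x ∈ S, ∀ v ∈ N, G.Adj x v) ∧
      Fintype.card V ≤ #N + ∑ x ∈ S, (Fintype.card V - G.degree x) := by
  classical
  refine ⟨(S.biUnion fun x => (G.neighborFinset x)ᶜ)ᶜ, fun x hx v hv => ?_, ?_⟩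
  · by_contra hxv
    exact mem_compl.1 hv (mem_biUnion.2 ⟨x, hx, by simpa using hxv⟩)
  · have hcard := card_biUnion_le (s := S) (t := fun x => (G.neighborFinset x)ᶜ)
    simp only [card_compl, card_neighborFinset_eq_degree] at hcard ⊢
    omega

variable {n k s t : ℕ} {F : Finset (Finset (Fin n))} {S N : Finset (Fin n)}

/-- From `u` go to `x` and then zigzag between `S` and its common neighbours outside `e`: this
walk of length `2 * t` expands, and `e` is a further edge at `u`. -/
lemma not_adj_of_mem_of_disjoint (hk : 2 ≤ k) (hs : 2 * (2 * t + 1) * k ≤ s)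
    (hF : (F : Set (Finset (Fin n))).Sized k) (hpath : ¬ ContainsLinearPath k (2 * t + 1) F)
    (hS : #S = t) (hadj : ∀ x ∈ S, ∀ v ∈ N, (kernelGraph s F).Adj x v) (hN : t + k ≤ #N)
    {e : Finset (Fin n)} (he : e ∈ F) (heS : Disjoint e S) {u x : Fin n} (hu : u ∈ e)
    (hx : x ∈ S) : ¬ (kernelGraph s F).Adj x u := by
  intro hxu
  have ht : 0 < t := hS ▸ card_pos.2 ⟨x, hx⟩
  have hNe : t - 1 < #(N \ e) := by
    have := le_card_sdiff e N
    have := hF he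
    omega
  obtain ⟨v, p, hp, hlen, hsupp⟩ := exists_isPath_of_complete
    (fun a ha b hb => hadj a ha b (mem_sdiff.1 hb).1) (by omega : t - 1 < #S) hNe hx
  have hpe : ∀ y ∈ p.support, y ∉ e := fun y hy hye => (hsupp y hy).elim
    (Finset.disjoint_left.1 heS hye) fun h => (mem_sdiff.1 h).2 hye
  have hlen' : (Walk.cons hxu.symm p).length = 2 * t := by rw [Walk.length_cons, hlen]; omega
  have hlinear := containsLinearPath_of_isKernel_of_walk hk hF (IsKernel.of_mem he)
    (p := Walk.cons hxu.symm p) (hp.cons fun h => hpe u h hu) (by rwa [hlen']) fun y hy => by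
      obtain rfl | hy := List.mem_cons.1 hy
      · simpa using hu
      · exact iff_of_false (hpe y hy) fun h => hpe y hy (h ▸ hu)
  rw [hlen'] at hlinear
  exact hpath hlinear

lemma mul_pow_lt_choose {A z M r : ℕ} (hr : r ≠ 0) (hz : 0 < z)
    (h : (A * r.factorial + 1) * z ≤ M + 1 - r) : A * z ^ r < M.choose r := by
  refine Nat.lt_of_mul_lt_mul_left (a := r.factorial) ?_
  calc r.factorial * (A * z ^ r) < (A * r.factorial + 1) * z ^ r := by
        nlinarith [Nat.pow_pos (n := r) hz]
    _ ≤ ((A * r.factorial + 1) * z) ^ r := by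
        rw [mul_pow]
        exact Nat.mul_le_mul_right _ (Nat.le_self_pow hr _)
    _ ≤ (M + 1 - r) ^ r := Nat.pow_le_pow_left h r
    _ ≤ r.factorial * M.choose r :=
        (Nat.pow_sub_le_descFactorial M r).trans_eq (Nat.descFactorial_eq_factorial_mul_choose M r)

lemma eq_zero_of_mul_choose_le_mul_pow {A z M r : ℕ} (hr : r ≠ 0)
    (hM : (A * r.factorial + 1) * z ≤ M + 1 - r) (h : z * M.choose r ≤ A * z ^ (r + 1)) :
    z = 0 := by
  by_contra hz
  have hlt := Nat.mul_lt_mul_of_pos_left (mul_pow_lt_choose hr (Nat.pos_of_ne_zero hz) hM)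
    (Nat.pos_of_ne_zero hz)
  rw [mul_left_comm, ← pow_succ'] at hlt
  exact hlt.not_ge h

/-- Edges avoiding `S` lie in the set `Z` of non-neighbours of a fixed `x ∈ S`. There are at most
`O(#Z ^ (k - 1))` of them, but each `u ∈ Z` costs a positive proportion of the `k`-sets through
`{x, u}`, so a nonempty `Z` loses more than it gains. -/
theorem eq_meetingFamily_of_degree_kernelGraph (hk : 4 ≤ k) (hs : 2 * (2 * t + 1) * k ≤ s)
    (hF : (F : Set (Finset (Fin n))).Sized k) (hpath : ¬ ContainsLinearPath k (2 * t + 1) F)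
    (hS : #S = t) (hadj : ∀ x ∈ S, ∀ v ∈ N, (kernelGraph s F).Adj x v) (hN : t + k ≤ #N)
    {x : Fin n} (hx : x ∈ S)
    (hdeg : ((starlessConst k s + 2 * (2 * t + 1)) * (k - 2).factorial + 2) *
      (n - (kernelGraph s F).degree x) + s + k ≤ n)
    (hcard : #(meetingFamily k S) ≤ #F) : F = meetingFamily k S := by
  set C := starlessConst k s + 2 * (2 * t + 1)
  set Z : Finset (Fin n) := {u | u ≠ x ∧ ¬ (kernelGraph s F).Adj x u}
  have hZcard : #Z ≤ n - (kernelGraph s F).degree x := by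
    have hsub : Z ⊆ ((kernelGraph s F).neighborFinset x)ᶜ := fun u hu => by
      simpa using (mem_filter.1 hu).2.2
    simpa [card_compl] using card_le_card hsub
  have hedge : ∀ e ∈ F \ meetingFamily k S, e ⊆ Z := fun e he u hu => by
    have heS := disjoint_of_mem_sdiff_meetingFamily hF he
    exact mem_filter.2 ⟨mem_univ u, fun h => Finset.disjoint_left.1 heS hu (h ▸ hx),
      not_adj_of_mem_of_disjoint (by omega) hs hF hpath hS hadj hN (mem_sdiff.1 he).1
        heS hu hx⟩
  have hgain : #(F \ meetingFamily k S) ≤ C * #Z ^ (k - 1) :=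
    card_le_mul_pow_of_pathGraph_free hk (by nlinarith) (by nlinarith)
      (hF.mono (coe_subset.2 sdiff_subset)) hedge fun h =>
        pathGraph_free_kernelGraph (by omega) hF hs hpath
          (h.mono_right (kernelGraph_mono sdiff_subset))
  have hloss : #Z * (n - #Z - 1 - s).choose (k - 2) ≤ #(meetingFamily k S \ F) := by
    simpa using card_mul_choose_le_card_meetingFamily_sdiff (by omega) hx
      (show x ∉ Z by simp [Z]) fun u hu => (mem_filter.1 hu).2.2
  have hZ : #Z = 0 := by
    refine eq_zero_of_mul_choose_le_mul_pow (A := C) (by omega) ?_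
      ((hloss.trans (card_sdiff_le_card_sdiff_iff.2 hcard)).trans ?_)
    · have := Nat.mul_le_mul_left (C * (k - 2).factorial + 2) hZcard
      rw [add_one_mul]
      rw [add_mul] at this
      omega
    · rwa [show k - 2 + 1 = k - 1 by omega]
  rw [hZ, zero_pow (by omega), mul_zero, Nat.le_zero, card_eq_zero, sdiff_eq_empty_iff_subset]
    at hgain
  exact eq_of_subset_of_card_le hgain hcard

end Exactness

theorem turan_linear_path_odd_extremal_general (k t : ℕ) (hk : 4 ≤ k) (ht : 1 ≤ t) :
    ∃ n₀ : ℕ, ∀ n : ℕ, n₀ ≤ n → ∀ F : Finset (Finset (Fin n)),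
      (∀ A ∈ F, #A = k) → ¬ ContainsLinearPath k (2 * t + 1) F →
      ∑ i ∈ Icc 1 t, (n - i).choose (k - 1) ≤ #F →
      ∃ S : Finset (Fin n), #S = t ∧ F = meetingFamily k S := by
  obtain ⟨s, hs⟩ : ∃ s, s = 2 * (2 * t + 1) * k := ⟨_, rfl⟩
  set D := (starlessConst k s + 2 * (2 * t + 1)) * (k - 2).factorial + 2
  obtain ⟨n₀, hstable⟩ := exists_forall_mul_sub_degree_kernelGraph_le (k := k) (s := s) t
    (2 * (t + D)) hk (by nlinarith) (by nlinarith)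
  refine ⟨n₀ + 2 * (s + k + t), fun n hn F hF hpath hcard => ?_⟩
  obtain ⟨S, hS, hdeg⟩ := hstable n (by omega) F hF
    (pathGraph_free_kernelGraph (by omega) hF hs.ge hpath) hcard
  obtain ⟨x, hx⟩ := card_pos.1 (hS.symm ▸ ht : 0 < #S)
  obtain ⟨N, hadj, hN⟩ := exists_complete_card_le_add_sum (kernelGraph s F) S
  have hsum : (t + D) * (2 * ∑ y ∈ S, (n - (kernelGraph s F).degree y)) ≤ (t + D) * n := by
    have := sum_le_card_nsmul S _ n hdeg
    rw [← mul_sum, smul_eq_mul, hS] at this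
    nlinarith
  have hsum' := Nat.le_of_mul_le_mul_left hsum (by omega)
  have hdeg' : 2 * (D * (n - (kernelGraph s F).degree x)) ≤ n := by nlinarith [hdeg x hx]
  rw [Fintype.card_fin] at hN
  refine ⟨S, hS, eq_meetingFamily_of_degree_kernelGraph hk hs.ge hF hpath hS hadj (by omega) hx
    (show D * _ + s + k ≤ n by omega) ?_⟩
  rwa [card_meetingFamily (by omega), hS, Fintype.card_fin]

/-- Uniqueness of the extremal family for `P^{(k)}_{2t+1}`: an extremal family consists of
all k-subsets of [n] meeting a fixed t-set S. -/
theorem turan_linear_path_odd_extremal (k t : ℕ) (hk : 4 ≤ k) (ht : 1 ≤ t) :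
    ∃ n₀ : ℕ, ∀ n : ℕ, n₀ ≤ n → ∀ F : Finset (Finset (Fin n)),
      (∀ A ∈ F, A.card = k) → ¬ ContainsLinearPath k (2 * t + 1) F →
      F.card = ∑ i ∈ Finset.Icc 1 t, (n - i).choose (k - 1) →
      ∃ S : Finset (Fin n), S.card = t ∧
        F = (Finset.powersetCard k Finset.univ).filter (fun A => (A ∩ S).Nonempty) := by
  obtain ⟨n₀, hn₀⟩ := turan_linear_path_odd_extremal_general k t hk ht
  exact ⟨n₀, fun n hn F hF hpath hcard => hn₀ n hn F hF hpath hcard.ge⟩
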